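/- The subgroup H of GL(2,ℂ) generated by {j, d} has order 16; moreover, setting a := j*d and b := d, the pair {a, b} also generates H and satisfies a^8 = 1, b^2 = 1, and a*b = b*a^3, so H is the semidihedral group of order 16. -/

import Mathlib

open Matrix Complex
open scoped MatrixGroups

noncomputable section

def jM : Matrix (Fin 2) (Fin 2) ℂ := !![0, Complex.I; Complex.I, 0]
def dM : Matrix (Fin 2) (Fin 2) ℂ :=
  ((Real.sqrt 2 : ℂ))⁻¹ • !![-1, 1; 1, 1]

def H : Subgroup (GL (Fin 2) ℂ) :=
  Subgroup.closure {g : GL (Fin 2) ℂ |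
    (g : Matrix (Fin 2) (Fin 2) ℂ) = jM ∨
    (g : Matrix (Fin 2) (Fin 2) ℂ) = dM}

theorem card_aux {G : Type*} [Group G] (a b : G) (h8 : a ^ 8 = 1) (h4 : a ^ 4 ≠ 1)
    (hb : b ^ 2 = 1) (hab : a * b = b * a ^ 3) :
    Nat.card (Subgroup.closure {a, b}) = 16 := by
  have hbb : b * b = 1 := by rw [← pow_two, hb]
  have hbi : b⁻¹ = b := inv_eq_of_mul_eq_one_left hbb
  have hord : orderOf a = 8 := by
    haveI : Fact (Nat.Prime 2) := ⟨Nat.prime_two⟩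
    exact orderOf_eq_prime_pow (p := 2) (n := 2) h4 h8
  have hbab : b * a * b⁻¹ = a ^ 3 := by
    rw [hbi, mul_assoc, hab, ← mul_assoc, hbb, one_mul]
  have hconj : ∀ x ∈ Subgroup.zpowers a, b * x * b ∈ Subgroup.zpowers a := by
    rintro x ⟨n, rfl⟩
    have : b * a ^ n * b = (a ^ 3) ^ n := by
      rw [← hbab, conj_zpow, hbi]
    simp only [this]
    exact Subgroup.zpow_mem _ (Subgroup.pow_mem _ (Subgroup.mem_zpowers a) 3) n
  have hbK : b ∉ Subgroup.zpowers a := by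
    rintro ⟨n, hn⟩
    have hc : a * b = b * a := by
      rw [← hn]; exact ((Commute.refl a).zpow_right n).eq
    rw [hc] at hab
    have h1 : a = a ^ 3 := mul_left_cancel hab
    have h2 : a ^ 2 = 1 := by
      have : a * 1 = a * a ^ 2 := by rw [mul_one, ← pow_succ']; exact h1
      exact (mul_left_cancel this).symm
    apply h4
    rw [show 4 = 2 * 2 from rfl, pow_mul, h2, one_pow]
  have hset : ((Subgroup.closure {a, b} : Subgroup G) : Set G) =
      (Subgroup.zpowers a : Set G) ∪ (fun x => x * b) '' (Subgroup.zpowers a : Set G) := by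
    have ha' : a ∈ Subgroup.closure {a, b} := Subgroup.subset_closure (by simp)
    have hb' : b ∈ Subgroup.closure {a, b} := Subgroup.subset_closure (by simp)
    have hK : Subgroup.zpowers a ≤ Subgroup.closure {a, b} := by
      rw [Subgroup.zpowers_le]; exact ha'
    apply Set.Subset.antisymm
    · intro g hg
      induction hg using Subgroup.closure_induction with
      | mem x hx =>
        rcases hx with rfl | rfl
        · exact Or.inl (Subgroup.mem_zpowers _)
        · exact Or.inr ⟨1, Subgroup.one_mem _, one_mul _⟩
      | one => exact Or.inl (Subgroup.one_mem _)
      | mul x y _ _ hx hy =>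
        rcases hx with hx | ⟨x, hx, rfl⟩ <;> rcases hy with hy | ⟨y, hy, rfl⟩
        · exact Or.inl (Subgroup.mul_mem _ hx hy)
        · exact Or.inr ⟨x * y, Subgroup.mul_mem _ hx hy, mul_assoc _ _ _⟩
        · refine Or.inr ⟨x * (b * y * b), Subgroup.mul_mem _ hx (hconj _ hy), ?_⟩
          simp [mul_assoc, hbb]
        · refine Or.inl ?_
          have := Subgroup.mul_mem _ hx (hconj _ hy)
          simpa [mul_assoc] using this
      | inv x _ hx =>
        rcases hx with hx | ⟨x, hx, rfl⟩
        · exact Or.inl (Subgroup.inv_mem _ hx)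
        · refine Or.inr ⟨b * x⁻¹ * b, hconj _ (Subgroup.inv_mem _ hx), ?_⟩
          simp [mul_assoc, hbb, hbi]
    · rintro g (hg | ⟨x, hx, rfl⟩)
      · exact hK hg
      · exact Subgroup.mul_mem _ (hK hx) hb'
  have hcardK : (Subgroup.zpowers a : Set G).ncard = 8 := by
    rw [← hord, ← Nat.card_zpowers]; rfl
  have hfin : (Subgroup.zpowers a : Set G).Finite :=
    Set.finite_of_ncard_ne_zero (by rw [hcardK]; norm_num)
  have hdisj : Disjoint (Subgroup.zpowers a : Set G)
      ((fun x => x * b) '' (Subgroup.zpowers a : Set G)) := by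
    rw [Set.disjoint_left]
    rintro _ hg ⟨x, hx, rfl⟩
    exact hbK ((Subgroup.mul_mem_cancel_left _ hx).1 hg)
  change ((Subgroup.closure {a, b} : Subgroup G) : Set G).ncard = 16
  rw [hset, Set.ncard_union_eq hdisj hfin (hfin.image _),
    Set.ncard_image_of_injective _ (mul_left_injective b), hcardK]

theorem sqrt_two_inv_sq : ((Real.sqrt 2 : ℂ))⁻¹ * ((Real.sqrt 2 : ℂ))⁻¹ = 2⁻¹ := by
  rw [← mul_inv, ← Complex.ofReal_mul, Real.mul_self_sqrt (by norm_num)]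
  norm_num

theorem jM_sq : jM * jM = -1 := by
  ext i k
  fin_cases i <;> fin_cases k <;> simp [jM]

theorem dM_sq : dM * dM = 1 := by
  rw [dM, smul_mul_smul_comm, sqrt_two_inv_sq]
  ext i k
  fin_cases i <;> fin_cases k <;> norm_num

theorem aM_sq : (jM * dM) * (jM * dM) = !![0, -1; 1, 0] := by
  rw [dM, mul_smul_comm, smul_mul_smul_comm, sqrt_two_inv_sq]
  ext i k
  fin_cases i <;> fin_cases k <;> simp [jM] <;> norm_num

theorem aM_four : (jM * dM) * (jM * dM) * ((jM * dM) * (jM * dM)) = -1 := by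
  rw [aM_sq]
  ext i k
  fin_cases i <;> fin_cases k <;> simp

theorem H_is_semidihedral_of_order_16 :
    Nat.card H = 16 ∧
    ∃ a b : GL (Fin 2) ℂ,
      (a : Matrix (Fin 2) (Fin 2) ℂ) = jM * dM ∧
      (b : Matrix (Fin 2) (Fin 2) ℂ) = dM ∧
      Subgroup.closure {a, b} = H ∧
      a ^ 8 = 1 ∧ b ^ 2 = 1 ∧ a * b = b * a ^ 3 := by
  let j : GL (Fin 2) ℂ := ⟨jM, -jM, by simp [jM_sq], by simp [jM_sq]⟩
  let d : GL (Fin 2) ℂ := ⟨dM, dM, dM_sq, dM_sq⟩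
  have hj : (j : Matrix (Fin 2) (Fin 2) ℂ) = jM := rfl
  have hd : (d : Matrix (Fin 2) (Fin 2) ℂ) = dM := rfl
  have hdd : d * d = 1 := Units.ext dM_sq
  have hjj : j * j = -1 := Units.ext jM_sq
  have h4 : (j * d) ^ 4 = -1 := by
    rw [show 4 = 2 * 2 from rfl, pow_mul, pow_two, pow_two]
    exact Units.ext aM_four
  have h8 : (j * d) ^ 8 = 1 := by
    rw [show 8 = 4 * 2 from rfl, pow_mul, h4]; simp
  have hne : (j * d) ^ 4 ≠ 1 := by
    rw [h4]
    intro h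
    have h2 := congrArg (fun g : GL (Fin 2) ℂ => (g : Matrix (Fin 2) (Fin 2) ℂ) 0 0) h
    norm_num at h2
  have hd2 : d ^ 2 = 1 := by rw [pow_two, hdd]
  have hab : (j * d) * d = d * (j * d) ^ 3 := by
    apply mul_right_cancel (b := j * d)
    rw [mul_assoc d, ← pow_succ, h4, mul_assoc j, hdd, mul_one, ← mul_assoc, hjj]
    simp
  have hcl : Subgroup.closure {j * d, d} = H := by
    have hs : {g : GL (Fin 2) ℂ | (g : Matrix (Fin 2) (Fin 2) ℂ) = jM ∨
        (g : Matrix (Fin 2) (Fin 2) ℂ) = dM} = {j, d} := by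
      ext g
      simp only [Set.mem_setOf_eq, Set.mem_insert_iff, Set.mem_singleton_iff, Units.ext_iff,
        hj, hd]
    rw [H, hs]
    apply le_antisymm
    · rw [Subgroup.closure_le]
      have h1 : j ∈ Subgroup.closure {j, d} := Subgroup.subset_closure (by simp)
      have h2 : d ∈ Subgroup.closure {j, d} := Subgroup.subset_closure (by simp)
      rintro g (rfl | rfl)
      · exact Subgroup.mul_mem _ h1 h2
      · exact h2
    · rw [Subgroup.closure_le]
      have h1 : j * d ∈ Subgroup.closure {j * d, d} := Subgroup.subset_closure (by simp)
      have h2 : d ∈ Subgroup.closure {j * d, d} := Subgroup.subset_closure (by simp)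
      rintro g (rfl | rfl)
      · exact (Subgroup.mul_mem_cancel_right _ h2).1 h1
      · exact h2
  refine ⟨?_, j * d, d, rfl, rfl, hcl, h8, hd2, hab⟩
  rw [← hcl]
  exact card_aux _ _ h8 hne hd2 hab
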